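/- Let ζ>0 and ν>0. Set k₀ = ⌈10^{2/ν}⌉ and c = Σ_{k=k₀+1}^∞ (k^{-ζν} − (k+1)^{-ζν})·k^{-ν} (a finite sum of a convergent series), and let ρ = Σ_{k=k₀+1}^∞ (k^{-ζν} − (k+1)^{-ζν})·δ_{k^{-ν}} + c·δ_1, where δ_x is the Dirac measure at x. Then: (i) ρ((0,λ]) ≤ λ^ζ for all λ ∈ [0,1]; and (ii) the Steepest Descent losses L_n (defined by q_0 = 1, α_n = (∫λ q_n² dρ)/(∫λ² q_n² dρ), q_{n+1}(λ) = (1-α_nλ)q_n(λ), L_n = (1/2)∫ q_n(λ)² ρ(dλ)) satisfy liminf_{n→∞} n^ζ·L_n ≥ 10^{-2ζ}·Γ(ζ+1)/(2·(2 ln 2)^ζ). -/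

import Mathlib

open MeasureTheory Filter Set

/-!
The steps are the inverses of the means of `l` under the weights `l q_n(l) ^ 2 ρ(dl)`, and by a
Gram determinant argument of Akaike the variances of `l` under these weights never decrease. The
atom at `1` makes the initial variance close to its maximal value `1 / 4`; hence the means stay in
`[2 / 5, 3 / 5]`, the steps stay at most `5 / 2`, and `q_n(l) ≥ exp (-5 n l)` on the small spectrum
`μ = ρ - c δ_1`. Twice the loss is therefore at least the Laplace transform of `μ` at `10 n`, which
decays like `n ^ (-ζ)` because `μ([0, l])` is asymptotic to `l ^ ζ`.
-/

open scoped Topology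

section PositiveFunctional

variable {R : Type*} [CommRing R] [Algebra ℝ R] {L L' : R →ₗ[ℝ] ℝ}

/-- The variance of `x` under a linear functional `L` on an algebra, scaled by `L 1 ^ 2` because
`L` need not be normalised. -/
def scaledVariance (L : R →ₗ[ℝ] ℝ) (x : R) : ℝ := L 1 * L (x ^ 2) - L x ^ 2

theorem scaledVariance_sub_smul_one (L : R →ₗ[ℝ] ℝ) (x : R) (c : ℝ) :
    scaledVariance L (x - c • 1) = scaledVariance L x := by
  have hsq : (x - c • (1 : R)) ^ 2 = x ^ 2 - (2 * c) • x + c ^ 2 • 1 := by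
    simp only [Algebra.smul_def, map_mul, map_pow, map_ofNat]
    ring
  simp only [scaledVariance, hsq, map_add, map_sub, map_smul, smul_eq_mul]
  ring

/-- The Gram determinant of `1`, `s`, `s ^ 2` is nonnegative; with `L s = 0` it takes this form. -/
theorem pow_three_le_of_map_eq_zero (hL : ∀ p, 0 ≤ L (p ^ 2)) {s : R} (h1 : 0 < L 1)
    (hs : L s = 0) (hs2 : 0 < L (s ^ 2)) :
    L (s ^ 2) ^ 3 ≤ L 1 * (L (s ^ 2) * L (s ^ 4) - L (s ^ 3) ^ 2) := by
  obtain ⟨m₀, hm₀⟩ : ∃ m, m = L 1 := ⟨_, rfl⟩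
  obtain ⟨m₂, hm₂⟩ : ∃ m, m = L (s ^ 2) := ⟨_, rfl⟩
  obtain ⟨m₃, hm₃⟩ : ∃ m, m = L (s ^ 3) := ⟨_, rfl⟩
  -- The component of `s ^ 2` orthogonal to `1` and `s`, up to a factor.
  have hsq : ((m₀ * m₂) • s ^ 2 - (m₀ * m₃) • s - m₂ ^ 2 • (1 : R)) ^ 2 =
      (m₀ * m₂) ^ 2 • s ^ 4 - (2 * m₀ ^ 2 * m₂ * m₃) • s ^ 3 +
        ((m₀ * m₃) ^ 2 - 2 * m₀ * m₂ ^ 3) • s ^ 2 + (2 * m₀ * m₃ * m₂ ^ 2) • s + m₂ ^ 4 • 1 := by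
    simp only [Algebra.smul_def, map_mul, map_pow, map_sub, map_ofNat]
    ring
  have hnonneg := hL ((m₀ * m₂) • s ^ 2 - (m₀ * m₃) • s - m₂ ^ 2 • (1 : R))
  simp only [hsq, map_add, map_sub, map_smul, smul_eq_mul, hs, ← hm₀, ← hm₂, ← hm₃] at hnonneg
  rw [← hm₀] at h1
  rw [← hm₂] at hs2
  rw [← hm₀, ← hm₂, ← hm₃]
  have hgram : 0 ≤ (m₀ * m₂) * (m₀ * (m₂ * L (s ^ 4) - m₃ ^ 2) - m₂ ^ 3) := by
    linear_combination hnonneg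
  exact sub_nonneg.1 (nonneg_of_mul_nonneg_right hgram (mul_pos h1 hs2))

/-- Akaike's monotonicity: reweighting by `(1 - a x) ^ 2`, where `1 / a` is the mean of `x`, does
not decrease the normalised variance of `x`. -/
theorem le_scaledVariance_of_reweight (hL : ∀ p, 0 ≤ L (p ^ 2)) {x : R} {a δ : ℝ} (h1 : 0 < L 1)
    (hδ : 0 < δ) (hvar : δ * L 1 ^ 2 ≤ scaledVariance L x) (ha : a * L x = L 1)
    (hL' : ∀ p, L' p = L ((1 - a • x) ^ 2 * p)) :
    0 < L' 1 ∧ δ * L' 1 ^ 2 ≤ scaledVariance L' x := by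
  have ha0 : a ≠ 0 := by
    rintro rfl
    simp [← ha] at h1
  obtain ⟨s, hs⟩ : ∃ s, s = x - a⁻¹ • (1 : R) := ⟨_, rfl⟩
  have hLs : L s = 0 := by
    rw [hs, map_sub, map_smul, smul_eq_mul, ← ha, inv_mul_cancel_left₀ ha0, sub_self]
  have hL's (p : R) : L' p = a ^ 2 * L (s ^ 2 * p) := by
    have hfactor : 1 - a • x = (-a) • s := by
      rw [hs, smul_sub, smul_smul, neg_mul, mul_inv_cancel₀ ha0]
      module
    rw [hL', hfactor, smul_pow, neg_sq, smul_mul_assoc, map_smul, smul_eq_mul]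
  have hvar_s : scaledVariance L x = L 1 * L (s ^ 2) := by
    rw [← scaledVariance_sub_smul_one L x a⁻¹, ← hs, scaledVariance, hLs]
    ring
  have hvar'_s : scaledVariance L' x = a ^ 4 * (L (s ^ 2) * L (s ^ 4) - L (s ^ 3) ^ 2) := by
    rw [← scaledVariance_sub_smul_one L' x a⁻¹, ← hs, scaledVariance, hL's, hL's, hL's, mul_one,
      ← pow_add, ← pow_succ]
    ring
  have hδs : δ * L 1 ≤ L (s ^ 2) := by
    refine le_of_mul_le_mul_left ?_ h1
    linear_combination hvar + hvar_s
  have hs2 : 0 < L (s ^ 2) := (mul_pos hδ h1).trans_le hδs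
  have hgram : δ * L (s ^ 2) ^ 2 ≤ L (s ^ 2) * L (s ^ 4) - L (s ^ 3) ^ 2 := by
    refine le_of_mul_le_mul_left ?_ h1
    calc L 1 * (δ * L (s ^ 2) ^ 2) = δ * L 1 * L (s ^ 2) ^ 2 := by ring
      _ ≤ L (s ^ 2) * L (s ^ 2) ^ 2 := by gcongr
      _ = L (s ^ 2) ^ 3 := by ring
      _ ≤ _ := pow_three_le_of_map_eq_zero hL h1 hLs hs2
  rw [hvar'_s, hL's, mul_one]
  refine ⟨by positivity, ?_⟩
  calc δ * (a ^ 2 * L (s ^ 2)) ^ 2 = a ^ 4 * (δ * L (s ^ 2) ^ 2) := by ring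
    _ ≤ _ := by gcongr

end PositiveFunctional

section Residual

variable {α : ℕ → ℝ} {a b l : ℝ} {n : ℕ}

/-- The residual polynomial `q_n` of the gradient method with step sizes `α`. -/
noncomputable def residualPoly (α : ℕ → ℝ) (n : ℕ) (l : ℝ) : ℝ :=
  ∏ i ∈ Finset.range n, (1 - α i * l)

/-- The loss `L_n` of the gradient method with step sizes `α` for the quadratic with spectral
measure `ρ`. -/
noncomputable def loss (ρ : Measure ℝ) (α : ℕ → ℝ) (n : ℕ) : ℝ :=
  1 / 2 * ∫ l, residualPoly α n l ^ 2 ∂ρ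

theorem residualPoly_zero : residualPoly α 0 l = 1 := Finset.prod_range_zero _

theorem residualPoly_succ : residualPoly α (n + 1) l = (1 - α n * l) * residualPoly α n l := by
  rw [residualPoly, Finset.prod_range_succ, mul_comm, residualPoly]

theorem eq_residualPoly_of_forall_succ {q : ℕ → ℝ → ℝ} (h0 : ∀ l, q 0 l = 1)
    (hsucc : ∀ n l, q (n + 1) l = (1 - α n * l) * q n l) : q = residualPoly α := by
  funext n l
  induction n with
  | zero => rw [h0, residualPoly_zero]
  | succ n ih => rw [hsucc, residualPoly_succ, ih]

theorem continuous_residualPoly (α : ℕ → ℝ) (n : ℕ) : Continuous (residualPoly α n) :=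
  continuous_finsetProd _ fun _ _ => by fun_prop

theorem exp_neg_two_mul_le_one_sub {u : ℝ} (h0 : 0 ≤ u) (h1 : 2 * u ≤ 1) :
    Real.exp (-(2 * u)) ≤ 1 - u := by
  calc Real.exp (-(2 * u)) ≤ 1 / (1 + 2 * u) := by
        rw [Real.exp_neg, ← one_div]
        gcongr
        linarith [Real.add_one_le_exp (2 * u)]
    _ ≤ 1 - u := by
        rw [div_le_iff₀ (by positivity)]
        nlinarith

theorem exp_neg_le_residualPoly (hα : ∀ i < n, α i ∈ Icc 0 b) (hl : 0 ≤ l) (hbl : 2 * (b * l) ≤ 1) :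
    Real.exp (-(2 * b * n * l)) ≤ residualPoly α n l := by
  have hpow : Real.exp (-(2 * b * n * l)) = ∏ _i ∈ Finset.range n, Real.exp (-(2 * (b * l))) := by
    rw [Finset.prod_const, Finset.card_range, ← Real.exp_nat_mul]
    ring_nf
  rw [hpow]
  refine Finset.prod_le_prod (fun i _ => (Real.exp_pos _).le) fun i hi => ?_
  obtain ⟨hα0, hαb⟩ := hα i (Finset.mem_range.1 hi)
  calc Real.exp (-(2 * (b * l))) ≤ 1 - b * l :=
        exp_neg_two_mul_le_one_sub (mul_nonneg (hα0.trans hαb) hl) hbl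
    _ ≤ 1 - α i * l := by gcongr

theorem residualPoly_mem_Icc (hα : ∀ i < n, α i ∈ Icc a b) (hl : 0 ≤ l) (hbl : b * l ≤ 1) :
    residualPoly α n l ∈ Icc 0 (Real.exp (-(a * n * l))) := by
  have hnonneg : ∀ i ∈ Finset.range n, 0 ≤ 1 - α i * l := fun i hi => by
    have := mul_le_mul_of_nonneg_right (hα i (Finset.mem_range.1 hi)).2 hl
    linarith
  have hpow : Real.exp (-(a * n * l)) = ∏ _i ∈ Finset.range n, Real.exp (-(a * l)) := by
    rw [Finset.prod_const, Finset.card_range, ← Real.exp_nat_mul]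
    ring_nf
  refine ⟨Finset.prod_nonneg hnonneg, hpow ▸ Finset.prod_le_prod hnonneg fun i hi => ?_⟩
  calc 1 - α i * l ≤ 1 - a * l := by
        gcongr
        exact (hα i (Finset.mem_range.1 hi)).1
    _ ≤ Real.exp (-(a * l)) := Real.one_sub_le_exp_neg _

end Residual

section SteepestDescent

open Polynomial

variable {ρ : Measure ℝ} [IsFiniteMeasure ρ] {α : ℕ → ℝ} {β δ : ℝ}

theorem integrable_of_ae_mem_Icc {E : Type*} [NormedAddCommGroup E] {a b : ℝ}
    (hρ : ∀ᵐ l ∂ρ, l ∈ Icc a b) {f : ℝ → E} (hf : Continuous f) : Integrable f ρ := by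
  rw [← Measure.restrict_eq_self_of_ae_mem hρ]
  exact hf.continuousOn.integrableOn_compact isCompact_Icc

/-- The step sizes `α` are those of Steepest Descent for the quadratic with spectral measure `ρ`. -/
def IsSteepestDescent (ρ : Measure ℝ) (α : ℕ → ℝ) : Prop :=
  ∀ n, α n = (∫ l, l * residualPoly α n l ^ 2 ∂ρ) / ∫ l, l ^ 2 * residualPoly α n l ^ 2 ∂ρ

/-- Integration of polynomials against `l * q_n(l) ^ 2 ρ(dl)`, where `q_n` is the residual
polynomial for the step sizes `α`. -/
noncomputable def residualFunctional (hρ : ∀ᵐ l ∂ρ, l ∈ Icc 0 β) (α : ℕ → ℝ) (n : ℕ) :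
    ℝ[X] →ₗ[ℝ] ℝ where
  toFun p := ∫ l, l * residualPoly α n l ^ 2 * p.eval l ∂ρ
  map_add' p r := by
    have hcont := continuous_residualPoly α n
    simp only [eval_add, mul_add]
    exact integral_add (integrable_of_ae_mem_Icc hρ (by fun_prop))
      (integrable_of_ae_mem_Icc hρ (by fun_prop))
  map_smul' c p := by
    rw [RingHom.id_apply, smul_eq_mul, ← integral_const_mul]
    refine integral_congr_ae (ae_of_all _ fun l => ?_)
    simp only [eval_smul, smul_eq_mul]
    ring

theorem residualFunctional_apply (hρ : ∀ᵐ l ∂ρ, l ∈ Icc 0 β) (α : ℕ → ℝ) (n : ℕ) (p : ℝ[X]) :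
    residualFunctional hρ α n p = ∫ l, l * residualPoly α n l ^ 2 * p.eval l ∂ρ := rfl

theorem residualFunctional_one (hρ : ∀ᵐ l ∂ρ, l ∈ Icc 0 β) (α : ℕ → ℝ) (n : ℕ) :
    residualFunctional hρ α n 1 = ∫ l, l * residualPoly α n l ^ 2 ∂ρ := by
  simp only [residualFunctional_apply, eval_one, mul_one]

theorem residualFunctional_X_pow (hρ : ∀ᵐ l ∂ρ, l ∈ Icc 0 β) (α : ℕ → ℝ) (n k : ℕ) :
    residualFunctional hρ α n (X ^ k) = ∫ l, l ^ (k + 1) * residualPoly α n l ^ 2 ∂ρ := by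
  simp only [residualFunctional_apply, eval_pow, eval_X, pow_succ', mul_right_comm]

theorem residualFunctional_X (hρ : ∀ᵐ l ∂ρ, l ∈ Icc 0 β) (α : ℕ → ℝ) (n : ℕ) :
    residualFunctional hρ α n X = ∫ l, l ^ 2 * residualPoly α n l ^ 2 ∂ρ := by
  simpa only [pow_one] using residualFunctional_X_pow hρ α n 1

theorem residualFunctional_sq_nonneg (hρ : ∀ᵐ l ∂ρ, l ∈ Icc 0 β) (α : ℕ → ℝ) (n : ℕ) (p : ℝ[X]) :
    0 ≤ residualFunctional hρ α n (p ^ 2) := by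
  refine integral_nonneg_of_ae ?_
  filter_upwards [hρ] with l hl
  have := hl.1
  rw [eval_pow]
  positivity

theorem residualFunctional_X_sq_le (hρ : ∀ᵐ l ∂ρ, l ∈ Icc 0 β) (α : ℕ → ℝ) (n : ℕ) :
    residualFunctional hρ α n (X ^ 2) ≤ β * residualFunctional hρ α n X := by
  have hcont := continuous_residualPoly α n
  rw [residualFunctional_X_pow, residualFunctional_X, ← integral_const_mul]
  refine integral_mono_ae (integrable_of_ae_mem_Icc hρ (by fun_prop))
    (integrable_of_ae_mem_Icc hρ (by fun_prop)) ?_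
  filter_upwards [hρ] with l hl
  calc l ^ 3 * residualPoly α n l ^ 2 = l * (l ^ 2 * residualPoly α n l ^ 2) := by ring
    _ ≤ β * (l ^ 2 * residualPoly α n l ^ 2) := by
        gcongr
        exact hl.2

theorem residualFunctional_succ (hρ : ∀ᵐ l ∂ρ, l ∈ Icc 0 β) (α : ℕ → ℝ) (n : ℕ) (p : ℝ[X]) :
    residualFunctional hρ α (n + 1) p =
      residualFunctional hρ α n ((1 - α n • X) ^ 2 * p) := by
  simp only [residualFunctional_apply, residualPoly_succ, eval_mul, eval_pow, eval_sub, eval_one,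
    eval_smul, eval_X, smul_eq_mul]
  refine integral_congr_ae (ae_of_all _ fun l => ?_)
  ring

theorem residualFunctional_X_pos (hρ : ∀ᵐ l ∂ρ, l ∈ Icc 0 β) (hβ : 0 < β) {n : ℕ} (hδ : 0 < δ)
    (h1 : 0 < residualFunctional hρ α n 1)
    (hvar : δ * residualFunctional hρ α n 1 ^ 2 ≤ scaledVariance (residualFunctional hρ α n) X) :
    0 < residualFunctional hρ α n X := by
  have hvar_pos : 0 < residualFunctional hρ α n 1 * residualFunctional hρ α n (X ^ 2) := by
    have : 0 < δ * residualFunctional hρ α n 1 ^ 2 := by positivity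
    rw [scaledVariance] at hvar
    linarith [sq_nonneg (residualFunctional hρ α n X)]
  exact pos_of_mul_pos_right
    ((pos_of_mul_pos_right hvar_pos h1.le).trans_le (residualFunctional_X_sq_le hρ α n)) hβ.le

namespace IsSteepestDescent

theorem stepSize_eq (hα : IsSteepestDescent ρ α) (hρ : ∀ᵐ l ∂ρ, l ∈ Icc 0 β) (n : ℕ) :
    α n = residualFunctional hρ α n 1 / residualFunctional hρ α n X := by
  rw [residualFunctional_one, residualFunctional_X]
  exact hα n

theorem le_scaledVariance (hα : IsSteepestDescent ρ α) (hρ : ∀ᵐ l ∂ρ, l ∈ Icc 0 β) (hβ : 0 < β)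
    (hδ : 0 < δ) (h1 : 0 < residualFunctional hρ α 0 1)
    (hvar : δ * residualFunctional hρ α 0 1 ^ 2 ≤ scaledVariance (residualFunctional hρ α 0) X)
    (n : ℕ) :
    0 < residualFunctional hρ α n 1 ∧
      δ * residualFunctional hρ α n 1 ^ 2 ≤ scaledVariance (residualFunctional hρ α n) X := by
  induction n with
  | zero => exact ⟨h1, hvar⟩
  | succ n ih =>
    refine le_scaledVariance_of_reweight (residualFunctional_sq_nonneg hρ α n) ih.1 hδ ih.2 ?_
      (residualFunctional_succ hρ α n)
    rw [hα.stepSize_eq hρ, div_mul_cancel₀ _ (residualFunctional_X_pos hρ hβ hδ ih.1 ih.2).ne']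

/-- A distribution on `[0, β]` with mean `m` has variance at most `m (β - m)`, so a variance bounded
below keeps the step size `1 / m` away from `1 / β` and from infinity. -/
theorem le_inv_stepSize_mul (hα : IsSteepestDescent ρ α) (hρ : ∀ᵐ l ∂ρ, l ∈ Icc 0 β) (hβ : 0 < β)
    (hδ : 0 < δ) (h1 : 0 < residualFunctional hρ α 0 1)
    (hvar : δ * residualFunctional hρ α 0 1 ^ 2 ≤ scaledVariance (residualFunctional hρ α 0) X)
    (n : ℕ) : δ ≤ (α n)⁻¹ * (β - (α n)⁻¹) := by
  obtain ⟨h1n, hvarn⟩ := hα.le_scaledVariance hρ hβ hδ h1 hvar n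
  have hX2 := residualFunctional_X_sq_le hρ α n
  rw [scaledVariance] at hvarn
  rw [hα.stepSize_eq hρ, inv_div]
  refine le_of_mul_le_mul_right (hvarn.trans ?_) (pow_pos h1n 2)
  calc _ ≤ residualFunctional hρ α n 1 * (β * residualFunctional hρ α n X) -
        residualFunctional hρ α n X ^ 2 := by gcongr
    _ = _ := by field_simp

end IsSteepestDescent

end SteepestDescent

section Laplace

variable {μ : Measure ℝ} {ζ K κ τ b : ℝ}

theorem integrableOn_exp_neg_mul_rpow (hζ : 0 < ζ) :
    IntegrableOn (fun u : ℝ => Real.exp (-u) * u ^ ζ) (Ioi 0) := by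
  simpa only [add_sub_cancel_right] using Real.GammaIntegral_convergent (add_pos hζ one_pos)

theorem integral_exp_neg_mul_rpow_eq_Gamma (hζ : 0 < ζ) :
    ∫ u in Ioi (0 : ℝ), Real.exp (-u) * u ^ ζ = Real.Gamma (ζ + 1) := by
  rw [Real.Gamma_eq_integral (add_pos hζ one_pos), add_sub_cancel_right]

theorem lintegral_exp_neg_eq_lintegral_measure_le [SFinite μ] {g : ℝ → ℝ} (hg : Measurable g) :
    ∫⁻ x, ENNReal.ofReal (Real.exp (-g x)) ∂μ =
      ∫⁻ u, ENNReal.ofReal (Real.exp (-u)) * μ {x | g x ≤ u} := by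
  have htail (c : ℝ) : ENNReal.ofReal (Real.exp (-c)) =
      ∫⁻ u, (Ici c).indicator (fun v => ENNReal.ofReal (Real.exp (-v))) u := by
    rw [lintegral_indicator measurableSet_Ici, restrict_Ioi_eq_restrict_Ici.symm,
      ← ofReal_integral_eq_lintegral_ofReal (integrableOn_exp_neg_Ioi c)
        (ae_of_all _ fun u => (Real.exp_pos _).le), integral_exp_neg_Ioi]
  have hle : MeasurableSet {z : ℝ × ℝ | g z.1 ≤ z.2} :=
    measurableSet_le (hg.comp measurable_fst) measurable_snd
  have hswap : Measurable (Function.uncurry fun x u : ℝ =>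
      (Ici (g x)).indicator (fun v => ENNReal.ofReal (Real.exp (-v))) u) :=
    Measurable.indicator (f := fun z : ℝ × ℝ => ENNReal.ofReal (Real.exp (-z.2)))
      (by fun_prop) hle
  rw [lintegral_congr fun x => htail (g x), lintegral_lintegral_swap hswap.aemeasurable]
  refine lintegral_congr fun u => ?_
  exact lintegral_indicator_const (hg measurableSet_Iic) _

theorem lintegral_exp_neg_mul [SFinite μ] (hb : 0 < b) :
    ∫⁻ x, ENNReal.ofReal (Real.exp (-(b * x))) ∂μ =
      ∫⁻ u, ENNReal.ofReal (Real.exp (-u)) * μ (Iic (u / b)) := by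
  simp_rw [lintegral_exp_neg_eq_lintegral_measure_le (measurable_const_mul b), ← le_div_iff₀' hb]
  rfl

theorem integral_exp_neg_mul_le [SFinite μ] (hζ : 0 < ζ) (hb : 0 < b) (h0 : μ (Iic 0) = 0)
    (hμ : ∀ t > 0, μ (Iic t) ≤ ENNReal.ofReal (K * t ^ ζ)) (hK : 0 ≤ K) :
    ∫ x, Real.exp (-(b * x)) ∂μ ≤ K / b ^ ζ * Real.Gamma (ζ + 1) := by
  have : 0 ≤ Real.Gamma (ζ + 1) := (Real.Gamma_pos_of_pos (add_pos hζ one_pos)).le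
  rw [integral_eq_lintegral_of_nonneg_ae (ae_of_all _ fun x => (Real.exp_pos _).le)
    (by fun_prop), lintegral_exp_neg_mul hb]
  refine ENNReal.toReal_le_of_le_ofReal (by positivity) ?_
  rw [← integral_exp_neg_mul_rpow_eq_Gamma hζ, ← integral_const_mul,
    ofReal_integral_eq_lintegral_ofReal ((integrableOn_exp_neg_mul_rpow hζ).const_mul _)
      (ae_restrict_of_forall_mem measurableSet_Ioi fun u (hu : 0 < u) => by positivity),
    ← lintegral_indicator measurableSet_Ioi]
  refine lintegral_mono fun u => ?_
  rcases le_or_gt u 0 with hu | hu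
  · have hzero : μ (Iic (u / b)) = 0 :=
      measure_mono_null (Iic_subset_Iic.2 (div_nonpos_of_nonpos_of_nonneg hu hb.le)) h0
    simp [hzero]
  · rw [indicator_of_mem (mem_Ioi.2 hu)]
    calc ENNReal.ofReal (Real.exp (-u)) * μ (Iic (u / b))
        ≤ ENNReal.ofReal (Real.exp (-u)) * ENNReal.ofReal (K * (u / b) ^ ζ) := by
          gcongr
          exact hμ _ (by positivity)
      _ = ENNReal.ofReal (K / b ^ ζ * (Real.exp (-u) * u ^ ζ)) := by
          rw [← ENNReal.ofReal_mul (Real.exp_pos _).le, Real.div_rpow hu.le hb.le]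
          congr 1
          ring

theorem le_integral_exp_neg_mul [SFinite μ] (hζ : 0 < ζ) (hb : 0 < b) (hτ : 0 < τ) (hκ : 0 ≤ κ)
    (hint : Integrable (fun x => Real.exp (-(b * x))) μ)
    (hμ : ∀ t ∈ Ioc 0 τ, ENNReal.ofReal (κ * t ^ ζ) ≤ μ (Iic t)) :
    κ / b ^ ζ * ∫ u in (0)..(b * τ), Real.exp (-u) * u ^ ζ ≤ ∫ x, Real.exp (-(b * x)) ∂μ := by
  have hexp : 0 ≤ᵐ[μ] fun x => Real.exp (-(b * x)) := ae_of_all _ fun x => (Real.exp_pos _).le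
  rw [← ENNReal.ofReal_le_ofReal_iff (integral_nonneg_of_ae hexp),
    ofReal_integral_eq_lintegral_ofReal hint hexp, lintegral_exp_neg_mul hb,
    intervalIntegral.integral_of_le (by positivity), ← integral_const_mul,
    ofReal_integral_eq_lintegral_ofReal
      (((integrableOn_exp_neg_mul_rpow hζ).mono_set Ioc_subset_Ioi_self).const_mul _)
      (ae_restrict_of_forall_mem measurableSet_Ioc fun u hu => by
        have := hu.1
        positivity),
    ← lintegral_indicator measurableSet_Ioc]
  refine lintegral_mono fun u => indicator_apply_le' (fun hu => ?_) fun _ => zero_le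
  have hub : u / b ∈ Ioc 0 τ := ⟨div_pos hu.1 hb, (div_le_iff₀' hb).2 hu.2⟩
  calc ENNReal.ofReal (κ / b ^ ζ * (Real.exp (-u) * u ^ ζ))
      = ENNReal.ofReal (Real.exp (-u)) * ENNReal.ofReal (κ * (u / b) ^ ζ) := by
        rw [← ENNReal.ofReal_mul (Real.exp_pos _).le, Real.div_rpow hu.1.le hb.le]
        congr 1
        ring
    _ ≤ ENNReal.ofReal (Real.exp (-u)) * μ (Iic (u / b)) := by
        gcongr
        exact hμ _ hub

/-- The lower half of an Abelian theorem for the Laplace transform. -/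
theorem eventually_lt_rpow_mul_integral_exp_neg_mul [SFinite μ] (hζ : 0 < ζ) (hκ : 0 ≤ κ)
    (hint : ∀ b > 0, Integrable (fun x => Real.exp (-(b * x))) μ)
    (hμ : ∀ᶠ t in 𝓝[>] 0, ENNReal.ofReal (κ * t ^ ζ) ≤ μ (Iic t))
    {C : ℝ} (hC : C < κ * Real.Gamma (ζ + 1)) :
    ∀ᶠ b in atTop, C < b ^ ζ * ∫ x, Real.exp (-(b * x)) ∂μ := by
  obtain ⟨τ, hτ : 0 < τ, hμτ⟩ := mem_nhdsGT_iff_exists_Ioc_subset.1 hμ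
  have htendsto : Tendsto (fun b => κ * ∫ u in (0)..(b * τ), Real.exp (-u) * u ^ ζ) atTop
      (𝓝 (κ * Real.Gamma (ζ + 1))) := by
    rw [← integral_exp_neg_mul_rpow_eq_Gamma hζ]
    exact (intervalIntegral_tendsto_integral_Ioi 0 (integrableOn_exp_neg_mul_rpow hζ)
      (tendsto_id.atTop_mul_const hτ)).const_mul κ
  filter_upwards [htendsto.eventually_const_lt hC, eventually_gt_atTop 0] with b hCb hb
  calc C < κ * ∫ u in (0)..(b * τ), Real.exp (-u) * u ^ ζ := hCb
    _ = b ^ ζ * (κ / b ^ ζ * ∫ u in (0)..(b * τ), Real.exp (-u) * u ^ ζ) := by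
        field_simp
    _ ≤ _ := by
        gcongr
        exact le_integral_exp_neg_mul hζ hb hτ hκ (hint b hb) hμτ

end Laplace

section Balance

variable {μ : Measure ℝ} {α : ℕ → ℝ} {ζ κ ε : ℝ}

/-- The measure `μ` with an atom added at `1`, which carries as much first moment as `μ`. -/
noncomputable def balance (μ : Measure ℝ) : Measure ℝ :=
  μ + ENNReal.ofReal (∫ l, l ∂μ) • Measure.dirac 1

theorem ae_balance_mem_Icc (hμ : ∀ᵐ l ∂μ, l ∈ Icc 0 1) : ∀ᵐ l ∂balance μ, l ∈ Icc 0 1 :=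
  ae_add_measure_iff.2
    ⟨hμ, Measure.ae_smul_measure ((ae_dirac_iff measurableSet_Icc).2 (by simp)) _⟩

theorem ae_mem_Icc_zero_one (hμ : ∀ᵐ l ∂μ, l ∈ Icc 0 (1 / 100)) : ∀ᵐ l ∂μ, l ∈ Icc 0 1 :=
  hμ.mono fun _ hl => Icc_subset_Icc_right (by norm_num) hl

theorem balance_Ioc_toReal_le (hμ : ∀ t > 0, μ (Iic t) ≤ ENNReal.ofReal (t ^ ζ))
    (hmass : μ univ + ENNReal.ofReal (∫ l, l ∂μ) ≤ 1) {t : ℝ} (ht : t ∈ Icc 0 1) :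
    (balance μ (Ioc 0 t)).toReal ≤ t ^ ζ := by
  rcases ht.1.eq_or_lt with rfl | ht0
  · simpa using Real.zero_rpow_nonneg ζ
  refine ENNReal.toReal_le_of_le_ofReal (by positivity) ?_
  rcases ht.2.eq_or_lt with rfl | ht1
  · rw [Real.one_rpow, ENNReal.ofReal_one]
    refine (measure_mono (subset_univ _)).trans ?_
    simpa [balance] using hmass
  · have hatom : (1 : ℝ) ∉ Ioc 0 t := fun h => ht1.not_ge h.2
    calc balance μ (Ioc 0 t) = μ (Ioc 0 t) := by simp [balance, hatom]
      _ ≤ μ (Iic t) := measure_mono Ioc_subset_Iic_self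
      _ ≤ ENNReal.ofReal (t ^ ζ) := hμ t ht0

variable [IsFiniteMeasure μ]

instance : IsFiniteMeasure (balance μ) := by
  have := Measure.smul_finite (Measure.dirac (1 : ℝ)) (ENNReal.ofReal_ne_top (r := ∫ l, l ∂μ))
  unfold balance
  infer_instance

theorem integral_balance (hμ : ∀ᵐ l ∂μ, l ∈ Icc 0 1) {f : ℝ → ℝ} (hf : Continuous f) :
    ∫ l, f l ∂balance μ = ∫ l, f l ∂μ + (∫ l, l ∂μ) * f 1 := by
  have hmean : 0 ≤ ∫ l, l ∂μ := integral_nonneg_of_ae (hμ.mono fun l hl => hl.1)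
  rw [balance, integral_add_measure (integrable_of_ae_mem_Icc hμ hf)
    ((integrable_dirac (by simp)).smul_measure ENNReal.ofReal_ne_top), integral_smul_measure,
    integral_dirac, ENNReal.toReal_ofReal hmean, smul_eq_mul]

theorem integral_pow_succ_mem_Icc (hμ : ∀ᵐ l ∂μ, l ∈ Icc 0 ε) (k : ℕ) :
    ∫ l, l ^ (k + 1) ∂μ ∈ Icc 0 (ε ^ k * ∫ l, l ∂μ) := by
  refine ⟨integral_nonneg_of_ae (hμ.mono fun l hl => pow_nonneg hl.1 _), ?_⟩
  rw [← integral_const_mul]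
  refine integral_mono_ae (integrable_of_ae_mem_Icc hμ (by fun_prop))
    (integrable_of_ae_mem_Icc hμ (by fun_prop)) ?_
  filter_upwards [hμ] with l hl
  rw [pow_succ]
  exact mul_le_mul_of_nonneg_right (pow_le_pow_left₀ hl.1 hl.2 k) hl.1

theorem le_scaledVariance_balance (hμ : ∀ᵐ l ∂μ, l ∈ Icc 0 (1 / 100))
    (hρ : ∀ᵐ l ∂balance μ, l ∈ Icc 0 1) (α : ℕ → ℝ) :
    6 / 25 * residualFunctional hρ α 0 1 ^ 2 ≤
      scaledVariance (residualFunctional hρ α 0) Polynomial.X := by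
  have hμ1 := ae_mem_Icc_zero_one hμ
  have hsecond := integral_pow_succ_mem_Icc hμ 1
  have hthird := integral_pow_succ_mem_Icc hμ 2
  rw [scaledVariance, residualFunctional_one, residualFunctional_X_pow, residualFunctional_X]
  simp only [residualPoly_zero, one_pow, mul_one]
  rw [integral_balance hμ1 (by fun_prop), integral_balance hμ1 (by fun_prop),
    integral_balance hμ1 (by fun_prop)]
  norm_num at hsecond hthird ⊢
  nlinarith

theorem IsSteepestDescent.stepSize_mem_Icc_of_balance (hα : IsSteepestDescent (balance μ) α)
    (hμ : ∀ᵐ l ∂μ, l ∈ Icc 0 (1 / 100)) (hmean : 0 < ∫ l, l ∂μ) (n : ℕ) :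
    α n ∈ Icc (5 / 3) (5 / 2) := by
  have hμ1 := ae_mem_Icc_zero_one hμ
  have hρ := ae_balance_mem_Icc hμ1
  have h1 : 0 < residualFunctional hρ α 0 1 := by
    rw [residualFunctional_one]
    simp only [residualPoly_zero, one_pow, mul_one]
    rw [integral_balance (f := fun l => l) hμ1 continuous_id, mul_one]
    exact add_pos hmean hmean
  have hvar := hα.le_inv_stepSize_mul hρ one_pos (by norm_num : (0 : ℝ) < 6 / 25) h1
    (le_scaledVariance_balance hμ hρ α) n
  have hroots : (0 : ℝ) < (α n)⁻¹ ∧ 2 / 5 ≤ (α n)⁻¹ ∧ (α n)⁻¹ ≤ 3 / 5 :=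
    ⟨by nlinarith, by nlinarith, by nlinarith⟩
  have : 0 < α n := inv_pos.1 hroots.1
  refine ⟨?_, ?_⟩
  · simpa using inv_anti₀ hroots.1 hroots.2.2
  · simpa using inv_anti₀ (by norm_num) hroots.2.1

theorem IsSteepestDescent.integral_exp_le_two_mul_loss
    (hα : IsSteepestDescent (balance μ) α) (hμ : ∀ᵐ l ∂μ, l ∈ Icc 0 (1 / 100))
    (hmean : 0 < ∫ l, l ∂μ) (n : ℕ) :
    ∫ l, Real.exp (-(10 * n * l)) ∂μ ≤ 2 * loss (balance μ) α n := by
  have hcont := continuous_residualPoly α n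
  rw [loss, ← mul_assoc, mul_one_div_cancel two_ne_zero, one_mul,
    integral_balance (ae_mem_Icc_zero_one hμ) (by fun_prop)]
  refine le_add_of_le_of_nonneg (integral_mono_ae (integrable_of_ae_mem_Icc hμ (by fun_prop))
    (integrable_of_ae_mem_Icc hμ (by fun_prop)) ?_) (by positivity)
  filter_upwards [hμ] with l hl
  calc Real.exp (-(10 * n * l)) = Real.exp (-(2 * (5 / 2) * n * l)) ^ 2 := by
        rw [← Real.exp_nat_mul]
        congr 1
        push_cast
        ring
    _ ≤ residualPoly α n l ^ 2 := by
        gcongr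
        exact exp_neg_le_residualPoly
          (fun i _ => Icc_subset_Icc_left (by norm_num) (hα.stepSize_mem_Icc_of_balance hμ hmean i))
          hl.1 (by linarith [hl.2])

/-- Since the step size is at least `5 / 3`, the mean of `l` under `l * q_n(l) ^ 2` is at most
`3 / 5`, which leaves at most `3 / 5` of the first moment to the atom. -/
theorem IsSteepestDescent.atom_mul_residualPoly_sq_le (hα : IsSteepestDescent (balance μ) α)
    (hμ : ∀ᵐ l ∂μ, l ∈ Icc 0 (1 / 100)) (hmean : 0 < ∫ l, l ∂μ) (n : ℕ) :
    (∫ l, l ∂μ) * residualPoly α n 1 ^ 2 ≤ ∫ l, residualPoly α n l ^ 2 ∂μ := by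
  have hcont := continuous_residualPoly α n
  have hμ1 := ae_mem_Icc_zero_one hμ
  have hstep := (hα.stepSize_mem_Icc_of_balance hμ hmean n).1
  rw [hα n, integral_balance hμ1 (by fun_prop), integral_balance hμ1 (by fun_prop)] at hstep
  have hsecond : 0 ≤ ∫ l, l ^ 2 * residualPoly α n l ^ 2 ∂μ :=
    integral_nonneg fun l => by positivity
  have hfirst :
      ∫ l, l * residualPoly α n l ^ 2 ∂μ ≤ 1 / 100 * ∫ l, residualPoly α n l ^ 2 ∂μ := by
    rw [← integral_const_mul]
    refine integral_mono_ae (integrable_of_ae_mem_Icc hμ (by fun_prop))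
      (integrable_of_ae_mem_Icc hμ (by fun_prop)) ?_
    filter_upwards [hμ] with l hl
    exact mul_le_mul_of_nonneg_right hl.2 (sq_nonneg _)
  have hatom : 0 ≤ (∫ l, l ∂μ) * residualPoly α n 1 ^ 2 := by positivity
  have : 0 ≤ ∫ l, residualPoly α n l ^ 2 ∂μ := integral_nonneg fun l => sq_nonneg _
  simp only [one_pow, one_mul] at hstep
  have hden : 0 < ∫ l, l ^ 2 * residualPoly α n l ^ 2 ∂μ +
      (∫ l, l ∂μ) * residualPoly α n 1 ^ 2 := by
    refine (add_nonneg hsecond hatom).lt_of_ne' fun h => ?_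
    rw [h, div_zero] at hstep
    norm_num at hstep
  rw [le_div_iff₀ hden] at hstep
  linarith

theorem IsSteepestDescent.loss_le_integral_exp (hα : IsSteepestDescent (balance μ) α)
    (hμ : ∀ᵐ l ∂μ, l ∈ Icc 0 (1 / 100)) (hmean : 0 < ∫ l, l ∂μ) (n : ℕ) :
    loss (balance μ) α n ≤ ∫ l, Real.exp (-(n * l)) ∂μ := by
  have hcont := continuous_residualPoly α n
  rw [loss, integral_balance (ae_mem_Icc_zero_one hμ) (by fun_prop)]
  have hatom := hα.atom_mul_residualPoly_sq_le hμ hmean n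
  suffices ∫ l, residualPoly α n l ^ 2 ∂μ ≤ ∫ l, Real.exp (-(n * l)) ∂μ by linarith
  refine integral_mono_ae (integrable_of_ae_mem_Icc hμ (by fun_prop))
    (integrable_of_ae_mem_Icc hμ (by fun_prop)) ?_
  filter_upwards [hμ] with l hl
  obtain ⟨hnonneg, hle⟩ := residualPoly_mem_Icc (n := n)
    (fun i _ => hα.stepSize_mem_Icc_of_balance hμ hmean i) hl.1 (by linarith [hl.2])
  calc residualPoly α n l ^ 2 ≤ Real.exp (-(5 / 3 * n * l)) ^ 2 := by gcongr
    _ = Real.exp (-(10 / 3 * (n * l))) := by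
        rw [← Real.exp_nat_mul]
        congr 1
        push_cast
        ring
    _ ≤ Real.exp (-(n * l)) := by
        rw [Real.exp_le_exp, neg_le_neg_iff]
        exact le_mul_of_one_le_left (mul_nonneg n.cast_nonneg hl.1) (by norm_num)

theorem integral_id_pos (hμ : ∀ᵐ l ∂μ, l ∈ Ioc 0 ε) [NeZero μ] : 0 < ∫ l, l ∂μ := by
  refine (integral_pos_iff_support_of_nonneg_ae (hμ.mono fun l hl => hl.1.le)
    (integrable_of_ae_mem_Icc (hμ.mono fun _ hl => Ioc_subset_Icc_self hl) continuous_id)).2 ?_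
  have hsupp : (Function.support fun l : ℝ => l) =ᵐ[μ] univ :=
    eventuallyEq_univ.2 (hμ.mono fun l hl => hl.1.ne')
  rw [measure_congr hsupp]
  exact Measure.measure_univ_pos.2 (NeZero.ne μ)

theorem IsSteepestDescent.isBoundedUnder_rpow_mul_loss (hα : IsSteepestDescent (balance μ) α)
    (hμ : ∀ᵐ l ∂μ, l ∈ Ioc 0 (1 / 100)) (hmean : 0 < ∫ l, l ∂μ) (hζ : 0 < ζ)
    (hle : ∀ t > 0, μ (Iic t) ≤ ENNReal.ofReal (t ^ ζ)) :
    IsBoundedUnder (· ≤ ·) atTop fun n : ℕ => (n : ℝ) ^ ζ * loss (balance μ) α n := by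
  refine isBoundedUnder_of_eventually_le (a := Real.Gamma (ζ + 1)) ?_
  have h0 : μ (Iic 0) = 0 := measure_eq_zero_iff_ae_notMem.2 (hμ.mono fun l hl => hl.1.not_ge)
  filter_upwards [eventually_gt_atTop 0] with n hn
  have hn0 : (0 : ℝ) < n := Nat.cast_pos.2 hn
  calc (n : ℝ) ^ ζ * loss (balance μ) α n
      ≤ (n : ℝ) ^ ζ * (1 / (n : ℝ) ^ ζ * Real.Gamma (ζ + 1)) := by
        gcongr
        refine (hα.loss_le_integral_exp (hμ.mono fun _ hl => Ioc_subset_Icc_self hl) hmean n).trans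
          (integral_exp_neg_mul_le hζ hn0 h0 ?_ zero_le_one)
        simpa only [one_mul] using hle
    _ = Real.Gamma (ζ + 1) := by field_simp

theorem IsSteepestDescent.eventually_lt_rpow_mul_loss (hα : IsSteepestDescent (balance μ) α)
    (hμ : ∀ᵐ l ∂μ, l ∈ Ioc 0 (1 / 100)) (hmean : 0 < ∫ l, l ∂μ) (hζ : 0 < ζ) (hκ : 0 ≤ κ)
    (hge : ∀ᶠ t in 𝓝[>] 0, ENNReal.ofReal (κ * t ^ ζ) ≤ μ (Iic t))
    {C : ℝ} (hC : C < κ * Real.Gamma (ζ + 1) / (2 * 10 ^ ζ)) :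
    ∀ᶠ n : ℕ in atTop, C < (n : ℝ) ^ ζ * loss (balance μ) α n := by
  have hμIcc : ∀ᵐ l ∂μ, l ∈ Icc 0 (1 / 100) := hμ.mono fun _ hl => Ioc_subset_Icc_self hl
  have htop : Tendsto (fun n : ℕ => 10 * (n : ℝ)) atTop atTop :=
    tendsto_natCast_atTop_atTop.const_mul_atTop (by norm_num)
  have hlaplace := htop.eventually (eventually_lt_rpow_mul_integral_exp_neg_mul hζ hκ
    (fun _ _ => integrable_of_ae_mem_Icc hμIcc (by fun_prop)) hge
    ((lt_div_iff₀ (by positivity)).1 hC))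
  filter_upwards [hlaplace] with n hn
  rw [Real.mul_rpow (by norm_num) n.cast_nonneg] at hn
  refine lt_of_mul_lt_mul_right (hn.trans_le ?_) (by positivity : (0 : ℝ) ≤ 2 * 10 ^ ζ)
  calc (10 : ℝ) ^ ζ * (n : ℝ) ^ ζ * ∫ l, Real.exp (-(10 * n * l)) ∂μ
      ≤ (10 : ℝ) ^ ζ * (n : ℝ) ^ ζ * (2 * loss (balance μ) α n) := by
        gcongr
        exact hα.integral_exp_le_two_mul_loss hμIcc hmean n
    _ = _ := by ring

theorem IsSteepestDescent.le_liminf_rpow_mul_loss (hα : IsSteepestDescent (balance μ) α)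
    (hμ : ∀ᵐ l ∂μ, l ∈ Ioc 0 (1 / 100)) (hmean : 0 < ∫ l, l ∂μ) (hζ : 0 < ζ)
    (hle : ∀ t > 0, μ (Iic t) ≤ ENNReal.ofReal (t ^ ζ))
    (hge : ∀ κ ∈ Ioo 0 1, ∀ᶠ t in 𝓝[>] 0, ENNReal.ofReal (κ * t ^ ζ) ≤ μ (Iic t)) :
    Real.Gamma (ζ + 1) / (2 * 10 ^ ζ) ≤
      liminf (fun n : ℕ => (n : ℝ) ^ ζ * loss (balance μ) α n) atTop := by
  -- The `liminf` in `ℝ` of a sequence tending to infinity is a junk value.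
  have hcobdd := (hα.isBoundedUnder_rpow_mul_loss hμ hmean hζ hle).isCoboundedUnder_ge
  have hG : 0 < Real.Gamma (ζ + 1) / (2 * 10 ^ ζ) :=
    div_pos (Real.Gamma_pos_of_pos (add_pos hζ one_pos)) (by positivity)
  refine le_of_forall_lt_imp_le_of_dense fun C hC => ?_
  obtain ⟨κ, hκ, hκ1⟩ := exists_between (max_lt one_pos ((div_lt_one hG).2 hC))
  obtain ⟨hκ0, hCκ⟩ := max_lt_iff.1 hκ
  have hCG : C < κ * Real.Gamma (ζ + 1) / (2 * 10 ^ ζ) := by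
    rwa [mul_div_assoc, ← div_lt_iff₀ hG]
  exact le_liminf_of_le hcobdd ((hα.eventually_lt_rpow_mul_loss hμ hmean hζ hκ0.le
    (hge κ ⟨hκ0, hκ1⟩) hCG).mono fun _ h => h.le)

end Balance

section TelescopingMeasure

variable {x y : ℕ → ℝ} {ζ κ t : ℝ}

theorem hasSum_sub_succ_of_antitone (hy : Antitone y) (hlim : Tendsto y atTop (𝓝 0)) :
    HasSum (fun k => y k - y (k + 1)) (y 0) := by
  rw [hasSum_iff_tendsto_nat_of_nonneg fun k => sub_nonneg.2 (hy k.le_succ)]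
  simp_rw [Finset.sum_range_sub']
  simpa only [sub_zero] using hlim.const_sub (y 0)

theorem exists_forall_le_iff_le (hx : Antitone x) (hlim : Tendsto x atTop (𝓝 0)) (ht : 0 < t) :
    ∃ k, ∀ j, x j ≤ t ↔ k ≤ j := by
  have hex : ∃ k, x k ≤ t := (hlim.eventually_le_const ht).exists
  classical
  exact ⟨Nat.find hex, fun j => ⟨Nat.find_min' hex, fun h => (hx h).trans (Nat.find_spec hex)⟩⟩

/-- The discrete measure with an atom of mass `y k - y (k + 1)` at each node `x k`. If `x` and `y`
decrease to `0`, then its cumulative distribution function takes the value `y k` at `x k`. -/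
noncomputable def telescopingMeasure (y x : ℕ → ℝ) : Measure ℝ :=
  Measure.sum fun k => ENNReal.ofReal (y k - y (k + 1)) • Measure.dirac (x k)

theorem telescopingMeasure_apply (hy : Antitone y) (hlim : Tendsto y atTop (𝓝 0)) {s : Set ℝ}
    (hs : MeasurableSet s) {k : ℕ} (hk : ∀ j, x j ∈ s ↔ k ≤ j) :
    telescopingMeasure y x s = ENNReal.ofReal (y k) := by
  have hmax : Antitone fun j => y (max j k) := fun i j hij => hy (max_le_max_right k hij)
  have hmax_lim : Tendsto (fun j => y (max j k)) atTop (𝓝 0) :=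
    hlim.comp (tendsto_atTop_mono (fun j => le_max_left j k) tendsto_id)
  have hsum := hasSum_sub_succ_of_antitone hmax hmax_lim
  have hatom (j : ℕ) : (ENNReal.ofReal (y j - y (j + 1)) • Measure.dirac (x j)) s =
      ENNReal.ofReal (y (max j k) - y (max (j + 1) k)) := by
    rw [Measure.smul_apply, Measure.dirac_apply' _ hs, smul_eq_mul]
    rcases le_or_gt k j with hkj | hjk
    · rw [indicator_of_mem ((hk j).2 hkj), Pi.one_apply, mul_one, max_eq_left hkj,
        max_eq_left (hkj.trans j.le_succ)]
    · rw [indicator_of_notMem (mt (hk j).1 hjk.not_ge), mul_zero, max_eq_right hjk.le,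
        max_eq_right hjk, sub_self, ENNReal.ofReal_zero]
  rw [telescopingMeasure, Measure.sum_apply _ hs, tsum_congr hatom,
    ← ENNReal.ofReal_tsum_of_nonneg (fun j => sub_nonneg.2 (hmax j.le_succ)) hsum.summable,
    hsum.tsum_eq, max_eq_right k.zero_le]

theorem telescopingMeasure_univ (hy : Antitone y) (hlim : Tendsto y atTop (𝓝 0)) :
    telescopingMeasure y x univ = ENNReal.ofReal (y 0) :=
  telescopingMeasure_apply hy hlim .univ fun j => by simp

theorem isFiniteMeasure_telescopingMeasure (hy : Antitone y) (hlim : Tendsto y atTop (𝓝 0)) :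
    IsFiniteMeasure (telescopingMeasure y x) :=
  ⟨telescopingMeasure_univ (x := x) hy hlim ▸ ENNReal.ofReal_lt_top⟩

theorem ae_telescopingMeasure_mem_Ioc (hx : Antitone x) (hpos : ∀ k, 0 < x k) :
    ∀ᵐ l ∂telescopingMeasure y x, l ∈ Ioc 0 (x 0) :=
  (Measure.ae_sum_iff' measurableSet_Ioc).2 fun k => Measure.ae_smul_measure
    ((ae_dirac_iff measurableSet_Ioc).2 ⟨hpos k, hx k.zero_le⟩) _

theorem integral_telescopingMeasure (hy : Antitone y) {f : ℝ → ℝ}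
    (hf : Integrable f (telescopingMeasure y x)) :
    ∫ l, f l ∂telescopingMeasure y x = ∑' k, (y k - y (k + 1)) * f (x k) := by
  rw [telescopingMeasure, integral_sum_measure hf]
  refine tsum_congr fun k => ?_
  rw [integral_smul_measure, integral_dirac, ENNReal.toReal_ofReal (sub_nonneg.2 (hy k.le_succ)),
    smul_eq_mul]

theorem telescopingMeasure_Iic_le (hx : Antitone x) (hxlim : Tendsto x atTop (𝓝 0))
    (hy : Antitone y) (hylim : Tendsto y atTop (𝓝 0)) (hpos : ∀ k, 0 < x k) (hζ : 0 < ζ)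
    (hle : ∀ k, y k ≤ x k ^ ζ) (ht : 0 < t) :
    telescopingMeasure y x (Iic t) ≤ ENNReal.ofReal (t ^ ζ) := by
  obtain ⟨k, hk⟩ := exists_forall_le_iff_le hx hxlim ht
  rw [telescopingMeasure_apply hy hylim measurableSet_Iic hk]
  exact ENNReal.ofReal_le_ofReal
    ((hle k).trans (Real.rpow_le_rpow (hpos k).le ((hk k).2 le_rfl) hζ.le))

theorem eventually_le_telescopingMeasure_Iic (hx : Antitone x) (hxlim : Tendsto x atTop (𝓝 0))
    (hy : Antitone y) (hylim : Tendsto y atTop (𝓝 0)) (hpos : ∀ k, 0 < x k) (hζ : 0 < ζ)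
    (hκ : 0 ≤ κ) (hge : ∀ᶠ k in atTop, κ * x k ^ ζ ≤ y (k + 1)) :
    ∀ᶠ t in 𝓝[>] 0, ENNReal.ofReal (κ * t ^ ζ) ≤ telescopingMeasure y x (Iic t) := by
  obtain ⟨N, hN⟩ := eventually_atTop.1 hge
  filter_upwards [Ioo_mem_nhdsGT (hpos N)] with t ht
  obtain ⟨k, hk⟩ := exists_forall_le_iff_le hx hxlim ht.1
  have hNk : N < k := not_le.1 fun h => ht.2.not_ge ((hk N).2 h)
  obtain ⟨m, rfl⟩ := Nat.exists_eq_add_one_of_ne_zero hNk.ne_bot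
  have htm : t < x m := not_le.1 fun h => m.lt_succ_self.not_ge ((hk m).1 h)
  rw [telescopingMeasure_apply hy hylim measurableSet_Iic hk]
  refine ENNReal.ofReal_le_ofReal (le_trans ?_ (hN m (Nat.lt_succ_iff.1 hNk)))
  have := ht.1.le
  gcongr

end TelescopingMeasure

section PowerNode

variable {s p r ζ ν : ℝ}

/-- The sequence `(s + 1) ^ (-p)`, `(s + 2) ^ (-p)`, …, written in the form taken by the nodes and
weights of the spectral measure. -/
noncomputable def powerNode (s p : ℝ) (k : ℕ) : ℝ := (k + s + 1) ^ (-p)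

theorem powerNode_succ (s p : ℝ) (k : ℕ) : powerNode s p (k + 1) = (k + s + 2) ^ (-p) := by
  rw [powerNode]
  congr 1
  push_cast
  ring

theorem powerNode_pos (hs : 0 ≤ s) (k : ℕ) : 0 < powerNode s p k :=
  Real.rpow_pos_of_pos (by positivity) _

theorem powerNode_rpow (hs : 0 ≤ s) (k : ℕ) : powerNode s p k ^ r = powerNode s (r * p) k := by
  rw [powerNode, powerNode, ← Real.rpow_mul (by positivity)]
  congr 1
  ring

theorem antitone_powerNode (hs : 0 ≤ s) (hp : 0 ≤ p) : Antitone (powerNode s p) := by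
  intro i j hij
  refine Real.rpow_le_rpow_of_nonpos (by positivity) ?_ (neg_nonpos.2 hp)
  gcongr

theorem tendsto_powerNode (s : ℝ) (hp : 0 < p) : Tendsto (powerNode s p) atTop (𝓝 0) :=
  (tendsto_rpow_neg_atTop hp).comp (tendsto_atTop_add_const_right _ _
    (tendsto_atTop_add_const_right _ _ tendsto_natCast_atTop_atTop))

theorem eventually_mul_powerNode_le_succ (hs : 0 ≤ s) (p : ℝ) {κ : ℝ} (hκ : κ < 1) :
    ∀ᶠ k in atTop, κ * powerNode s p k ≤ powerNode s p (k + 1) := by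
  have hbase : Tendsto (fun k : ℕ => 1 + 1 / ((k : ℝ) + s + 1)) atTop (𝓝 1) := by
    simpa only [add_zero] using (Tendsto.const_div_atTop (tendsto_atTop_add_const_right _ _
      (tendsto_atTop_add_const_right _ s tendsto_natCast_atTop_atTop)) 1).const_add 1
  have hratio := hbase.rpow_const (p := -p) (Or.inl one_ne_zero)
  rw [Real.one_rpow] at hratio
  filter_upwards [hratio.eventually_const_le hκ] with k hk
  calc κ * powerNode s p k ≤ (1 + 1 / ((k : ℝ) + s + 1)) ^ (-p) * powerNode s p k := by
        have := (powerNode_pos (p := p) hs k).le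
        gcongr
    _ = powerNode s p (k + 1) := by
        rw [powerNode_succ, powerNode, ← Real.mul_rpow (by positivity) (by positivity)]
        congr 1
        field_simp
        ring

/-- The convex function `y ^ (-p)` lies above its tangent lines. -/
theorem rpow_neg_sub_le_rpow_neg {v y : ℝ} (hp : 0 ≤ p) (hy : 0 < y) (hv : 0 < v) :
    y ^ (-p) - p * y ^ (-p) * ((v - y) / y) ≤ v ^ (-p) := by
  have hlog : 1 - p * ((v - y) / y) ≤ (v / y) ^ (-p) := by
    rw [Real.rpow_def_of_pos (div_pos hv hy), sub_div, div_self hy.ne']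
    have hexp := Real.add_one_le_exp (Real.log (v / y) * -p)
    have hle := mul_le_mul_of_nonneg_left (Real.log_le_sub_one_of_pos (div_pos hv hy)) hp
    linarith
  calc y ^ (-p) - p * y ^ (-p) * ((v - y) / y) = y ^ (-p) * (1 - p * ((v - y) / y)) := by ring
    _ ≤ y ^ (-p) * (v / y) ^ (-p) := by gcongr
    _ = v ^ (-p) := by rw [← Real.mul_rpow hy.le (by positivity), mul_div_cancel₀ _ hy.ne']

theorem rpow_neg_sub_mul_rpow_neg_le {a b y : ℝ} (ha : 0 ≤ a) (hb : 0 < b) (hy : 1 < y) :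
    (y ^ (-a) - (y + 1) ^ (-a)) * y ^ (-b) ≤
      a / (a + b) * ((y - 1) ^ (-(a + b)) - y ^ (-(a + b))) := by
  have hy0 : 0 < y := one_pos.trans hy
  have hright := rpow_neg_sub_le_rpow_neg (v := y + 1) ha hy0 (by positivity)
  have hleft := rpow_neg_sub_le_rpow_neg (p := a + b) (v := y - 1) (by positivity) hy0 (by linarith)
  rw [add_sub_cancel_left] at hright
  rw [sub_sub_cancel_left, neg_div] at hleft
  calc (y ^ (-a) - (y + 1) ^ (-a)) * y ^ (-b) ≤ a * y ^ (-a) * (1 / y) * y ^ (-b) := by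
        gcongr
        linarith
    _ = a / (a + b) * ((a + b) * y ^ (-(a + b)) * (1 / y)) := by
        rw [neg_add, Real.rpow_add hy0]
        field_simp
    _ ≤ _ := by
        gcongr
        linarith

theorem tsum_powerNode_sub_succ_mul_le {a b : ℝ} (ha : 0 ≤ a) (hb : 0 < b) (hs : 1 ≤ s) :
    ∑' k, (powerNode s a k - powerNode s a (k + 1)) * powerNode s b k ≤
      a / (a + b) * s ^ (-(a + b)) := by
  have hs0 : 0 ≤ s := zero_le_one.trans hs
  have hs1 : 0 ≤ s - 1 := sub_nonneg.2 hs
  have hab : 0 < a + b := add_pos_of_nonneg_of_pos ha hb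
  have hterm (k : ℕ) : (powerNode s a k - powerNode s a (k + 1)) * powerNode s b k ≤
      a / (a + b) * (powerNode (s - 1) (a + b) k - powerNode (s - 1) (a + b) (k + 1)) := by
    have hk : 1 < (k : ℝ) + s + 1 := lt_add_of_pos_left 1 (by positivity)
    rw [powerNode_succ, powerNode_succ, powerNode, powerNode, powerNode,
      (by ring : (k : ℝ) + s + 2 = k + s + 1 + 1), (by ring : (k : ℝ) + (s - 1) + 2 = k + s + 1),
      (by ring : (k : ℝ) + (s - 1) + 1 = k + s + 1 - 1)]
    exact rpow_neg_sub_mul_rpow_neg_le ha hb hk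
  have hnonneg (k : ℕ) : 0 ≤ (powerNode s a k - powerNode s a (k + 1)) * powerNode s b k :=
    mul_nonneg (sub_nonneg.2 (antitone_powerNode hs0 ha k.le_succ)) (powerNode_pos hs0 k).le
  have hsum := (hasSum_sub_succ_of_antitone (antitone_powerNode hs1 hab.le)
    (tendsto_powerNode (s - 1) hab)).mul_left (a / (a + b))
  calc _ ≤ ∑' k, a / (a + b) * (powerNode (s - 1) (a + b) k - powerNode (s - 1) (a + b) (k + 1)) :=
        (hsum.summable.of_nonneg_of_le hnonneg hterm).tsum_le_tsum hterm hsum.summable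
    _ = a / (a + b) * s ^ (-(a + b)) := by
        rw [hsum.tsum_eq, powerNode, Nat.cast_zero, zero_add, sub_add_cancel]

theorem rpow_neg_le_one_div_hundred (hν : 0 < ν) (hs : 10 ^ (2 / ν) ≤ s) :
    s ^ (-ν) ≤ 1 / 100 := by
  calc s ^ (-ν) ≤ ((10 : ℝ) ^ (2 / ν)) ^ (-ν) :=
        Real.rpow_le_rpow_of_nonpos (by positivity) hs (neg_nonpos.2 hν.le)
    _ = (10 : ℝ) ^ (-2 : ℝ) := by
        rw [← Real.rpow_mul (by norm_num), mul_neg, div_mul_cancel₀ _ hν.ne']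
    _ = 1 / 100 := by norm_num [Real.rpow_neg]

theorem powerNode_le_rpow_neg (hs : 0 < s) (hp : 0 ≤ p) (k : ℕ) : powerNode s p k ≤ s ^ (-p) :=
  Real.rpow_le_rpow_of_nonpos hs (by linarith [k.cast_nonneg (α := ℝ)]) (neg_nonpos.2 hp)

theorem one_add_le_hundred_rpow (hζ : 0 ≤ ζ) : 1 + ζ ≤ 100 ^ ζ := by
  calc 1 + ζ ≤ Real.exp 1 ^ ζ := by
        rw [← Real.exp_mul, one_mul, add_comm]
        exact Real.add_one_le_exp ζ
    _ ≤ 100 ^ ζ := by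
        gcongr
        linarith [Real.exp_one_lt_d9]

theorem powerNode_zero_add_tsum_le_one (hζ : 0 < ζ) (hν : 0 < ν) (hs : 10 ^ (2 / ν) ≤ s) :
    powerNode s (ζ * ν) 0 +
      ∑' k, (powerNode s (ζ * ν) k - powerNode s (ζ * ν) (k + 1)) * powerNode s ν k ≤ 1 := by
  have hs1 : 1 ≤ s := (Real.one_le_rpow (by norm_num) (by positivity)).trans hs
  have hs0 : 0 < s := one_pos.trans_le hs1
  have hhundred := rpow_neg_le_one_div_hundred hν hs
  have hpow : s ^ (-(ζ * ν)) ≤ (1 / 100) ^ ζ := by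
    rw [mul_comm, ← neg_mul, Real.rpow_mul hs0.le]
    gcongr
  have hmean : ζ * ν / (ζ * ν + ν) * s ^ (-(ζ * ν + ν)) ≤ ζ * (1 / 100) ^ ζ := by
    calc ζ * ν / (ζ * ν + ν) * s ^ (-(ζ * ν + ν))
        = ζ / (ζ + 1) * (s ^ (-(ζ * ν)) * s ^ (-ν)) := by
          rw [neg_add, Real.rpow_add hs0]
          field_simp
      _ ≤ ζ * ((1 / 100) ^ ζ * 1) := by
          gcongr
          · exact div_le_self hζ.le (by linarith)
          · linarith
      _ = _ := by rw [mul_one]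
  calc _ ≤ (1 / 100) ^ ζ + ζ * (1 / 100) ^ ζ :=
        add_le_add ((powerNode_le_rpow_neg hs0 (by positivity) 0).trans hpow)
          ((tsum_powerNode_sub_succ_mul_le (by positivity) hν hs1).trans hmean)
    _ = (1 / 100) ^ ζ * (1 + ζ) := by ring
    _ ≤ (1 / 100) ^ ζ * 100 ^ ζ := by
        gcongr
        exact one_add_le_hundred_rpow hζ.le
    _ = 1 := by
        rw [← Real.mul_rpow (by norm_num) (by norm_num)]
        norm_num

end PowerNode

section PowerSpectrum

variable {s ζ ν : ℝ} {α : ℕ → ℝ}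

/-- The part of the spectral measure below `1`: its distribution function agrees with `l ^ ζ` at
the nodes `(s + 1) ^ (-ν)`, `(s + 2) ^ (-ν)`, …. -/
noncomputable def powerSpectrum (s ζ ν : ℝ) : Measure ℝ :=
  telescopingMeasure (powerNode s (ζ * ν)) (powerNode s ν)

theorem isFiniteMeasure_powerSpectrum (hs : 0 ≤ s) (hζ : 0 < ζ) (hν : 0 < ν) :
    IsFiniteMeasure (powerSpectrum s ζ ν) :=
  isFiniteMeasure_telescopingMeasure (antitone_powerNode hs (by positivity))
    (tendsto_powerNode s (by positivity))

theorem ae_powerSpectrum_mem_Ioc (hs : 0 ≤ s) (hν : 0 < ν) :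
    ∀ᵐ l ∂powerSpectrum s ζ ν, l ∈ Ioc 0 (powerNode s ν 0) :=
  ae_telescopingMeasure_mem_Ioc (antitone_powerNode hs hν.le) (powerNode_pos hs)

theorem integral_powerSpectrum (hs : 0 ≤ s) (hζ : 0 < ζ) (hν : 0 < ν) :
    ∫ l, l ∂powerSpectrum s ζ ν =
      ∑' k, (powerNode s (ζ * ν) k - powerNode s (ζ * ν) (k + 1)) * powerNode s ν k := by
  have := isFiniteMeasure_powerSpectrum hs hζ hν
  exact integral_telescopingMeasure (antitone_powerNode hs (by positivity))
    (integrable_of_ae_mem_Icc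
      ((ae_powerSpectrum_mem_Ioc hs hν).mono fun _ hl => Ioc_subset_Icc_self hl) continuous_id)

theorem integral_powerSpectrum_pos (hs : 0 ≤ s) (hζ : 0 < ζ) (hν : 0 < ν) :
    0 < ∫ l, l ∂powerSpectrum s ζ ν := by
  have := isFiniteMeasure_powerSpectrum hs hζ hν
  have : NeZero (powerSpectrum s ζ ν) := by
    refine ⟨fun h => ?_⟩
    have huniv := telescopingMeasure_univ (x := powerNode s ν)
      (antitone_powerNode hs (by positivity)) (tendsto_powerNode s (mul_pos hζ hν))
    rw [← powerSpectrum, h, Measure.coe_zero, Pi.zero_apply, eq_comm,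
      ENNReal.ofReal_eq_zero] at huniv
    exact huniv.not_gt (powerNode_pos hs 0)
  exact integral_id_pos (ae_powerSpectrum_mem_Ioc hs hν)

theorem powerSpectrum_Iic_le (hs : 0 ≤ s) (hζ : 0 < ζ) (hν : 0 < ν) {t : ℝ} (ht : 0 < t) :
    powerSpectrum s ζ ν (Iic t) ≤ ENNReal.ofReal (t ^ ζ) :=
  telescopingMeasure_Iic_le (antitone_powerNode hs hν.le) (tendsto_powerNode s hν)
    (antitone_powerNode hs (by positivity)) (tendsto_powerNode s (by positivity))
    (powerNode_pos hs) hζ (fun k => (powerNode_rpow hs k).ge) ht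

theorem eventually_le_powerSpectrum_Iic (hs : 0 ≤ s) (hζ : 0 < ζ) (hν : 0 < ν) {κ : ℝ}
    (hκ : κ ∈ Ioo 0 1) :
    ∀ᶠ t in 𝓝[>] 0, ENNReal.ofReal (κ * t ^ ζ) ≤ powerSpectrum s ζ ν (Iic t) := by
  refine eventually_le_telescopingMeasure_Iic (antitone_powerNode hs hν.le)
    (tendsto_powerNode s hν) (antitone_powerNode hs (by positivity))
    (tendsto_powerNode s (by positivity)) (powerNode_pos hs) hζ hκ.1.le ?_
  simp_rw [powerNode_rpow hs]
  exact eventually_mul_powerNode_le_succ hs _ hκ.2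

theorem powerSpectrum_univ_add_le_one (hζ : 0 < ζ) (hν : 0 < ν) (hs : 10 ^ (2 / ν) ≤ s) :
    powerSpectrum s ζ ν univ + ENNReal.ofReal (∫ l, l ∂powerSpectrum s ζ ν) ≤ 1 := by
  have hs0 : 0 ≤ s := le_trans (by positivity) hs
  rw [powerSpectrum, telescopingMeasure_univ (antitone_powerNode hs0 (by positivity))
    (tendsto_powerNode s (by positivity)), ← powerSpectrum,
    ← ENNReal.ofReal_add (powerNode_pos hs0 0).le (integral_powerSpectrum_pos hs0 hζ hν).le,
    ENNReal.ofReal_le_one, integral_powerSpectrum hs0 hζ hν]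
  exact powerNode_zero_add_tsum_le_one hζ hν hs

theorem balance_powerSpectrum_eq (hs : 0 ≤ s) (hζ : 0 < ζ) (hν : 0 < ν) :
    balance (powerSpectrum s ζ ν) =
      Measure.sum (fun k : ℕ => ENNReal.ofReal ((k + s + 1) ^ (-(ζ * ν)) -
        (k + s + 2) ^ (-(ζ * ν))) • Measure.dirac ((k + s + 1) ^ (-ν))) +
      ENNReal.ofReal (∑' k : ℕ, ((k + s + 1) ^ (-(ζ * ν)) - (k + s + 2) ^ (-(ζ * ν))) *
        (k + s + 1) ^ (-ν)) • Measure.dirac 1 := by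
  rw [balance, integral_powerSpectrum hs hζ hν, powerSpectrum, telescopingMeasure]
  simp only [powerNode_succ]
  rfl

theorem ten_rpow_mul_div_le (hζ : 0 < ζ) {G : ℝ} (hG : 0 ≤ G) :
    10 ^ (-(2 * ζ)) * G / (2 * (2 * Real.log 2) ^ ζ) ≤ G / (2 * 10 ^ ζ) := by
  have hlog : (10 : ℝ) ≤ 100 * (2 * Real.log 2) := by linarith [Real.log_two_gt_d9]
  have hlog0 : 0 < 2 * Real.log 2 := by positivity
  calc 10 ^ (-(2 * ζ)) * G / (2 * (2 * Real.log 2) ^ ζ)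
      = G / (2 * (100 * (2 * Real.log 2)) ^ ζ) := by
        rw [Real.rpow_neg (by norm_num), Real.rpow_mul (by norm_num),
          Real.mul_rpow (by norm_num) hlog0.le]
        norm_num
        field_simp
    _ ≤ G / (2 * 10 ^ ζ) := by gcongr

theorem steepest_descent_lower_bound_general (hζ : 0 < ζ) (hν : 0 < ν) (hs : 10 ^ (2 / ν) ≤ s)
    (hα : IsSteepestDescent (balance (powerSpectrum s ζ ν)) α) :
    (∀ l ∈ Icc 0 1, (balance (powerSpectrum s ζ ν) (Ioc 0 l)).toReal ≤ l ^ ζ) ∧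
      Real.Gamma (ζ + 1) / (2 * 10 ^ ζ) ≤
        liminf (fun n : ℕ => (n : ℝ) ^ ζ * loss (balance (powerSpectrum s ζ ν)) α n) atTop := by
  have hs0 : 0 < s := lt_of_lt_of_le (by positivity) hs
  have := isFiniteMeasure_powerSpectrum hs0.le hζ hν
  have hcdf (t : ℝ) (ht : 0 < t) := powerSpectrum_Iic_le hs0.le hζ hν ht
  have hsmall : powerNode s ν 0 ≤ 1 / 100 :=
    (powerNode_le_rpow_neg hs0 hν.le 0).trans (rpow_neg_le_one_div_hundred hν hs)
  exact ⟨fun l hl => balance_Ioc_toReal_le hcdf (powerSpectrum_univ_add_le_one hζ hν hs) hl,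
    hα.le_liminf_rpow_mul_loss
      ((ae_powerSpectrum_mem_Ioc hs0.le hν).mono fun _ hl => Ioc_subset_Ioc_right hsmall hl)
      (integral_powerSpectrum_pos hs0.le hζ hν) hζ hcdf
      fun _ hκ => eventually_le_powerSpectrum_Iic hs0.le hζ hν hκ⟩

end PowerSpectrum

/-- A lower bound for Steepest Descent: the explicit discrete measure
`ρ = Σ_{k>k₀} (k^{-ζν} − (k+1)^{-ζν}) δ_{k^{-ν}} + c δ_1` (with `k₀ = ⌈10^{2/ν}⌉` and
`c` the total `λ`-mass of the first part) satisfies the power-law spectral condition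
`ρ((0,λ]) ≤ λ^ζ`, and the SD losses obey
`liminf_{n→∞} n^ζ L_n ≥ 10^{-2ζ} Γ(ζ+1)/(2(2 ln 2)^ζ)`.
(The summation index `k` below represents `k₀ + 1 + k`.) -/
theorem steepest_descent_lower_bound
    (ζ ν : ℝ) (hζ : 0 < ζ) (hν : 0 < ν)
    (k₀ : ℕ) (hk₀ : k₀ = ⌈(10:ℝ) ^ (2 / ν)⌉₊)
    (c : ℝ)
    (hc : c = ∑' k : ℕ,
      (((k : ℝ) + k₀ + 1) ^ (-(ζ * ν)) - ((k : ℝ) + k₀ + 2) ^ (-(ζ * ν))) *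
        ((k : ℝ) + k₀ + 1) ^ (-ν))
    (ρ : Measure ℝ)
    (hρ : ρ = Measure.sum (fun k : ℕ =>
        ENNReal.ofReal
            (((k : ℝ) + k₀ + 1) ^ (-(ζ * ν)) - ((k : ℝ) + k₀ + 2) ^ (-(ζ * ν))) •
          Measure.dirac (((k : ℝ) + k₀ + 1) ^ (-ν)))
      + ENNReal.ofReal c • Measure.dirac (1:ℝ))
    (q : ℕ → ℝ → ℝ) (A : ℕ → ℝ)
    (hq0 : ∀ l, q 0 l = 1)
    (hA : ∀ n, A n = (∫ l, l * (q n l) ^ 2 ∂ρ) / ∫ l, l ^ 2 * (q n l) ^ 2 ∂ρ)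
    (hqrec : ∀ n l, q (n + 1) l = (1 - A n * l) * q n l) :
    (∀ l ∈ Set.Icc (0:ℝ) 1, (ρ (Set.Ioc 0 l)).toReal ≤ l ^ ζ) ∧
    (10:ℝ) ^ (-(2 * ζ)) * Real.Gamma (ζ + 1) / (2 * (2 * Real.log 2) ^ ζ) ≤
      Filter.liminf (fun n : ℕ => (n : ℝ) ^ ζ * ((1/2) * ∫ l, (q n l) ^ 2 ∂ρ))
        Filter.atTop := by
  obtain rfl := eq_residualPoly_of_forall_succ hq0 hqrec
  obtain rfl : ρ = balance (powerSpectrum k₀ ζ ν) := by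
    rw [hρ, hc, balance_powerSpectrum_eq k₀.cast_nonneg hζ hν]
  obtain ⟨hcdf, hloss⟩ := steepest_descent_lower_bound_general hζ hν (hk₀ ▸ Nat.le_ceil _) hA
  exact ⟨hcdf, (ten_rpow_mul_div_le hζ (Real.Gamma_pos_of_pos (add_pos hζ one_pos)).le).trans hloss⟩
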